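/- Let F be a division ring, n ≥ 1, and A ∈ F^{n×n}. The following are equivalent: (1) there exists v ∈ F^{n×1} such that the pair (A, v) is controllable; (2) there exists u ∈ F^{1×n} such that the pair (u, A) is observable; (3) there exist a monic f ∈ F[z] of degree n and an invertible T ∈ F^{n×n} with A = T C_ℓ(f) T^{−1}; (4) there exist a monic g ∈ F[z] of degree n and an invertible S ∈ F^{n×n} with A = S C_r(g) S^{−1}. Moreover: if A = T C_ℓ(f) T^{−1}, then v := T e_1 makes (A, v) controllable and {h ∈ F[z] : (vh)^ℓ(A) = 0} = f·F[z]; and if A = S C_r(g) S^{−1}, then u := e_1^T S^{−1} makes (u, A) observable and {h ∈ F[z] : (hu)^r(A) = 0} = F[z]·g. -/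

import Mathlib

/-!
A column `v` with `(A, v)` controllable is the same thing as a basis `v, Av, …, A^{n-1}v` of
`F^{n×1}`, and in such a basis `A` becomes a left companion matrix (`exists_similar_of_ctrb`).
Conversely `e₁` is controllable for `C_ℓ(g)`, with controllability matrix the identity. Left
evaluation makes `F^{n×1}` a right `F[z]`-module (`leftEval_mul`), in which `g` kills `e₁` and a
polynomial of degree `< n` sends `e₁` to its coefficient vector; division with remainder by the
monic `g` then identifies the annihilator of `e₁` as `g·F[z]` (`leftEval_Cl_eq_zero_iff`), and
conjugation by `T` transports everything to `A` (`left_similar`).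

If `(A, v)` is controllable, let `u` be the last row of the inverse of the controllability matrix.
The product of the observability matrix of `(u, A)` and the controllability matrix of `(A, v)` is
the Hankel matrix `(u A^{i+j} v)`, which is anti-triangular with ones on the anti-diagonal, hence
invertible; so `(u, A)` is observable (`exists_obs_of_ctrb`).

The right-hand statements follow from the left-hand ones over the opposite ring `Fᵐᵒᵖ`, since the
transpose with entries in `Fᵐᵒᵖ` reverses products and exchanges controllability with
observability, `C_ℓ` with `C_r`, and left with right evaluation.
-/

open Polynomial Matrix Finset

section Defs

variable {F : Type*} [DivisionRing F]

/-- The scalar `c` regarded as a `1 × 1` matrix. -/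
noncomputable def oneByOne (c : F) : Matrix (Fin 1) (Fin 1) F := Matrix.of fun _ _ => c

/-- Left evaluation `(v f)^{𝔢ℓ}(A) := ∑ⱼ Aʲ v fⱼ` of `f ∈ F[z]` at an input pair `(A, v)`. -/
noncomputable def leftEval {m : Type*} [Fintype m] [DecidableEq m]
    (A : Matrix m m F) (v : Matrix m (Fin 1) F) (f : F[X]) : Matrix m (Fin 1) F :=
  ∑ j ∈ Finset.range (f.natDegree + 1), A ^ j * v * oneByOne (f.coeff j)

/-- Right evaluation `(f u)^{𝔢r}(A) := ∑ⱼ fⱼ u Aʲ` of `f ∈ F[z]` at an output pair `(u, A)`. -/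
noncomputable def rightEval {m : Type*} [Fintype m] [DecidableEq m]
    (u : Matrix (Fin 1) m F) (A : Matrix m m F) (f : F[X]) : Matrix (Fin 1) m F :=
  ∑ j ∈ Finset.range (f.natDegree + 1), oneByOne (f.coeff j) * u * A ^ j

/-- Controllability matrix `[v, Av, …, A^{n-1} v]`. -/
noncomputable def ctrbMat {n : ℕ} (A : Matrix (Fin n) (Fin n) F)
    (v : Matrix (Fin n) (Fin 1) F) : Matrix (Fin n) (Fin n) F :=
  Matrix.of fun i j => (A ^ (j : ℕ) * v) i 0

/-- Observability matrix with rows `u, uA, …, u A^{n-1}`. -/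
noncomputable def obsMat {n : ℕ} (u : Matrix (Fin 1) (Fin n) F)
    (A : Matrix (Fin n) (Fin n) F) : Matrix (Fin n) (Fin n) F :=
  Matrix.of fun i j => (u * A ^ (i : ℕ)) 0 j

/-- Left companion matrix of a (monic, degree `n`) polynomial: its columns are
`e₂, …, eₙ, -(p₀, …, p_{n-1})ᵀ`. -/
noncomputable def Cl (n : ℕ) (p : F[X]) : Matrix (Fin n) (Fin n) F :=
  Matrix.of fun i j =>
    if (j : ℕ) = n - 1 then -(p.coeff (i : ℕ)) else if (i : ℕ) = (j : ℕ) + 1 then 1 else 0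

/-- Right companion matrix: the transpose of the left one. -/
noncomputable def Cr (n : ℕ) (p : F[X]) : Matrix (Fin n) (Fin n) F := (Cl n p)ᵀ

/-- First standard basis column vector of `F^{n×1}`. -/
noncomputable def e1 (F : Type*) [DivisionRing F] (n : ℕ) : Matrix (Fin n) (Fin 1) F :=
  Matrix.of fun i _ => if (i : ℕ) = 0 then 1 else 0

/-- First standard basis row vector of `F^{1×n}`. -/
noncomputable def e1row (F : Type*) [DivisionRing F] (n : ℕ) : Matrix (Fin 1) (Fin n) F :=
  Matrix.of fun _ j => if (j : ℕ) = 0 then 1 else 0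

/-- Two-sided evaluation `(v f u)^{𝔢ts}(A,B) := ∑_{i+j+1 ≤ deg f} Aⁱ v f_{i+j+1} u Bʲ`. -/
noncomputable def tsEval {n k : ℕ} (A : Matrix (Fin n) (Fin n) F) (B : Matrix (Fin k) (Fin k) F)
    (v : Matrix (Fin n) (Fin 1) F) (u : Matrix (Fin 1) (Fin k) F) (f : F[X]) :
    Matrix (Fin n) (Fin k) F :=
  ∑ i ∈ Finset.range f.natDegree, ∑ j ∈ Finset.range f.natDegree,
    A ^ i * v * oneByOne (f.coeff (i + j + 1)) * u * B ^ j

end Defs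

section Left

variable {F : Type*} [DivisionRing F] {n : ℕ}

/-! ### Evaluation at an input pair -/

theorem oneByOne_zero : oneByOne (0 : F) = 0 := by
  ext; simp [oneByOne]

theorem oneByOne_add (a b : F) : oneByOne (a + b) = oneByOne a + oneByOne b := by
  ext; simp [oneByOne]

theorem oneByOne_mul (a b : F) : oneByOne (a * b) = oneByOne a * oneByOne b := by
  ext; simp [oneByOne, Matrix.mul_apply]

theorem mul_oneByOne_apply {m : Type*} (M : Matrix m (Fin 1) F) (c : F) (i : m) :
    (M * oneByOne c) i 0 = M i 0 * c := by
  simp [oneByOne, Matrix.mul_apply]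

theorem leftEval_eq_sum (A : Matrix (Fin n) (Fin n) F) (v : Matrix (Fin n) (Fin 1) F) (f : F[X]) :
    leftEval A v f = f.sum fun j a => A ^ j * v * oneByOne a := by
  rw [sum_over_range _ (by simp [oneByOne_zero])]
  rfl

theorem leftEval_add (A : Matrix (Fin n) (Fin n) F) (v : Matrix (Fin n) (Fin 1) F) (f g : F[X]) :
    leftEval A v (f + g) = leftEval A v f + leftEval A v g := by
  simp only [leftEval_eq_sum]
  exact sum_add_index _ _ _ (by simp [oneByOne_zero])
    (by simp [oneByOne_add, Matrix.mul_add])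

theorem leftEval_monomial (A : Matrix (Fin n) (Fin n) F) (v : Matrix (Fin n) (Fin 1) F)
    (k : ℕ) (a : F) : leftEval A v (monomial k a) = A ^ k * v * oneByOne a := by
  rw [leftEval_eq_sum, sum_monomial_index _ _ (by simp [oneByOne_zero])]

/-- Left evaluation turns `F^{n×1}` into a right `F[z]`-module; this is its associativity law. -/
theorem leftEval_mul (A : Matrix (Fin n) (Fin n) F) (v : Matrix (Fin n) (Fin 1) F) (f g : F[X]) :
    leftEval A v (f * g) = leftEval A (leftEval A v f) g := by
  induction g using Polynomial.induction_on' with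
  | add p q hp hq => rw [mul_add, leftEval_add, hp, hq, leftEval_add]
  | monomial k b =>
    induction f using Polynomial.induction_on' with
    | add p q hp hq =>
      rw [add_mul, leftEval_add, hp, hq, leftEval_add]
      simp only [leftEval_monomial, Matrix.mul_add, Matrix.add_mul]
    | monomial l a =>
      simp only [leftEval_monomial, monomial_mul_monomial, oneByOne_mul, Matrix.mul_assoc]
      rw [add_comm l k, pow_add, Matrix.mul_assoc]

theorem leftEval_zero_vec (A : Matrix (Fin n) (Fin n) F) (f : F[X]) : leftEval A 0 f = 0 := by
  simp [leftEval]

/-! ### Similarity -/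

theorem conj_pow_mul {T T' : Matrix (Fin n) (Fin n) F} (h : T' * T = 1)
    (C : Matrix (Fin n) (Fin n) F) (v : Matrix (Fin n) (Fin 1) F) (j : ℕ) :
    (T * C * T') ^ j * (T * v) = T * (C ^ j * v) := by
  induction j with
  | zero => simp
  | succ j ih =>
    calc (T * C * T') ^ (j + 1) * (T * v)
        = T * C * T' * ((T * C * T') ^ j * (T * v)) := by rw [pow_succ', Matrix.mul_assoc]
      _ = T * (C * ((T' * T) * (C ^ j * v))) := by rw [ih]; simp only [Matrix.mul_assoc]
      _ = T * (C ^ (j + 1) * v) := by rw [h, Matrix.one_mul, pow_succ', Matrix.mul_assoc]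

theorem ctrbMat_conj {T T' : Matrix (Fin n) (Fin n) F} (h : T' * T = 1)
    (C : Matrix (Fin n) (Fin n) F) (v : Matrix (Fin n) (Fin 1) F) :
    ctrbMat (T * C * T') (T * v) = T * ctrbMat C v := by
  ext i j
  simp only [ctrbMat, Matrix.of_apply, conj_pow_mul h, Matrix.mul_apply (M := T)]

theorem leftEval_conj {T T' : Matrix (Fin n) (Fin n) F} (h : T' * T = 1)
    (C : Matrix (Fin n) (Fin n) F) (v : Matrix (Fin n) (Fin 1) F) (f : F[X]) :
    leftEval (T * C * T') (T * v) f = T * leftEval C v f := by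
  simp only [leftEval, conj_pow_mul h, Matrix.mul_sum]
  simp only [Matrix.mul_assoc]

/-! ### Companion matrices -/

theorem Cl_pow_mul_e1 (g : F[X]) (j : ℕ) (hj : j < n) (i : Fin n) :
    (Cl n g ^ j * e1 F n) i 0 = if (i : ℕ) = j then 1 else 0 := by
  induction j generalizing i with
  | zero => simp [e1]
  | succ j ih =>
    rw [pow_succ', Matrix.mul_assoc, Matrix.mul_apply]
    simp only [ih (by omega), mul_ite, mul_one, mul_zero]
    rw [Finset.sum_eq_single ⟨j, by omega⟩]
    · have : j ≠ n - 1 := by omega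
      simp [Cl, this]
    · intro b _ hb
      exact if_neg fun h => hb (Fin.ext h)
    · simp

theorem Cl_pow_n_mul_e1 (hn : 1 ≤ n) (g : F[X]) (i : Fin n) :
    (Cl n g ^ n * e1 F n) i 0 = -g.coeff i := by
  obtain ⟨m, rfl⟩ : ∃ m, n = m + 1 := ⟨n - 1, by omega⟩
  rw [pow_succ', Matrix.mul_assoc, Matrix.mul_apply]
  simp only [Cl_pow_mul_e1 (n := m + 1) g m (by omega), mul_ite, mul_one, mul_zero]
  rw [Finset.sum_eq_single (Fin.last m)]
  · simp [Cl]
  · intro b _ hb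
    exact if_neg fun h => hb (Fin.ext h)
  · simp

theorem ctrbMat_Cl (g : F[X]) : ctrbMat (Cl n g) (e1 F n) = 1 := by
  ext i j
  simp [ctrbMat, Cl_pow_mul_e1 g j j.2, Matrix.one_apply, Fin.ext_iff]

/-- Evaluating a polynomial of degree `< n` at a companion pair returns its coefficient vector. -/
theorem leftEval_Cl_of_lt (g r : F[X]) (hr : r.natDegree < n) (i : Fin n) :
    leftEval (Cl n g) (e1 F n) r i 0 = r.coeff i := by
  rw [leftEval_eq_sum, sum_over_range' _ (by simp [oneByOne_zero]) n hr, Matrix.sum_apply,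
    Finset.sum_eq_single (i : ℕ)]
  · simp [mul_oneByOne_apply, Cl_pow_mul_e1 g i i.2]
  · intro b hb hbi
    rw [mul_oneByOne_apply, Cl_pow_mul_e1 g b (Finset.mem_range.1 hb), if_neg hbi.symm, zero_mul]
  · simp

theorem leftEval_Cl_self (hn : 1 ≤ n) (g : F[X]) (hg : g.Monic) (hd : g.natDegree = n) :
    leftEval (Cl n g) (e1 F n) g = 0 := by
  ext i k
  obtain rfl : k = 0 := Subsingleton.elim _ _
  have hc : g.coeff n = 1 := hd ▸ hg.coeff_natDegree
  rw [leftEval, hd, Finset.sum_range_succ, Matrix.add_apply, Matrix.sum_apply,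
    mul_oneByOne_apply, Cl_pow_n_mul_e1 hn, hc, Finset.sum_eq_single (i : ℕ)]
  · simp [mul_oneByOne_apply, Cl_pow_mul_e1 g i i.2]
  · intro b hb hbi
    rw [mul_oneByOne_apply, Cl_pow_mul_e1 g b (Finset.mem_range.1 hb), if_neg hbi.symm, zero_mul]
  · simp

theorem leftEval_Cl_eq_zero_iff (hn : 1 ≤ n) (g : F[X]) (hg : g.Monic) (hd : g.natDegree = n)
    (h : F[X]) : leftEval (Cl n g) (e1 F n) h = 0 ↔ ∃ h' : F[X], h = g * h' := by
  have hmul (q : F[X]) : leftEval (Cl n g) (e1 F n) (g * q) = 0 := by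
    rw [leftEval_mul, leftEval_Cl_self hn g hg hd, leftEval_zero_vec]
  constructor
  · intro h0
    have hg1 : g ≠ 1 := by
      rintro rfl
      simp at hd
      omega
    have hlt : (h %ₘ g).natDegree < n := hd ▸ natDegree_modByMonic_lt h hg hg1
    have hr0 : leftEval (Cl n g) (e1 F n) (h %ₘ g) = 0 := by
      rw [← modByMonic_add_div h g, leftEval_add, hmul, add_zero] at h0
      exact h0
    have hr : h %ₘ g = 0 := by
      ext k
      rcases lt_or_ge k n with hk | hk
      · rw [← leftEval_Cl_of_lt g _ hlt ⟨k, hk⟩, hr0]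
        simp
      · rw [coeff_eq_zero_of_natDegree_lt (hlt.trans_le hk), coeff_zero]
    exact ⟨h /ₘ g, by rw [← zero_add (g * _), ← hr, modByMonic_add_div]⟩
  · rintro ⟨h', rfl⟩
    exact hmul h'

theorem left_similar (hn : 1 ≤ n) (A : Matrix (Fin n) (Fin n) F)
    (g : F[X]) (T T' : Matrix (Fin n) (Fin n) F) (hg : g.Monic) (hd : g.natDegree = n)
    (h1 : T * T' = 1) (h2 : T' * T = 1) (hA : A = T * Cl n g * T') :
    IsUnit (ctrbMat A (T * e1 F n)) ∧
      ∀ h : F[X], (leftEval A (T * e1 F n) h = 0 ↔ ∃ h' : F[X], h = g * h') := by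
  subst hA
  refine ⟨?_, fun h => ?_⟩
  · rw [ctrbMat_conj h2, ctrbMat_Cl, mul_one]
    exact ⟨⟨T, T', h1, h2⟩, rfl⟩
  · rw [← leftEval_Cl_eq_zero_iff hn g hg hd, leftEval_conj h2]
    constructor
    · intro h0
      rw [← Matrix.one_mul (leftEval _ _ _), ← h2, Matrix.mul_assoc, h0, Matrix.mul_zero]
    · intro h0
      rw [h0, Matrix.mul_zero]

/-- In the basis `v, Av, …, A^{n-1}v` of a controllable pair, `A` acts as the companion matrix
whose last column holds the coordinates of `A^n v`. -/
theorem exists_similar_of_ctrb (A : Matrix (Fin n) (Fin n) F)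
    (v : Matrix (Fin n) (Fin 1) F) (h : IsUnit (ctrbMat A v)) :
    ∃ (g : F[X]) (T T' : Matrix (Fin n) (Fin n) F),
      g.Monic ∧ g.natDegree = n ∧ T * T' = 1 ∧ T' * T = 1 ∧ A = T * Cl n g * T' := by
  obtain ⟨⟨T, T', h1, h2⟩, hT : T = ctrbMat A v⟩ := h
  set c : Matrix (Fin n) (Fin 1) F := T' * (A ^ n * v) with hc
  set p : F[X] := ∑ i : Fin n, C (-c i 0) * X ^ (i : ℕ) with hp
  have hpd : p.degree < n := degree_sum_fin_lt fun i => -c i 0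
  have hcoeff (i : Fin n) : (X ^ n + p).coeff i = -c i 0 := by
    rw [coeff_add, coeff_X_pow, if_neg i.2.ne, zero_add, hp, finsetSum_coeff,
      Finset.sum_eq_single i]
    · simp
    · intro b _ hb
      rw [coeff_C_mul_X_pow, if_neg fun hh => hb (Fin.ext hh.symm)]
    · simp
  refine ⟨X ^ n + p, T, T', monic_X_pow_add hpd, ?_, h1, h2, ?_⟩
  · refine natDegree_eq_of_degree_eq_some ?_
    rw [degree_add_eq_left_of_degree_lt (by rwa [degree_X_pow]), degree_X_pow]
  · have key : A * T = T * Cl n (X ^ n + p) := by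
      ext i j
      have hl : (A * T) i j = (A ^ ((j : ℕ) + 1) * v) i 0 := by
        rw [pow_succ', Matrix.mul_assoc, Matrix.mul_apply, Matrix.mul_apply, hT]
        rfl
      rw [hl]
      by_cases hj : (j : ℕ) = n - 1
      · have hjn : (j : ℕ) + 1 = n := by omega
        have hr : (T * Cl n (X ^ n + p) : Matrix (Fin n) (Fin n) F) i j = (T * c) i 0 := by
          simp only [Matrix.mul_apply, Cl, Matrix.of_apply, hj, if_true, hcoeff, neg_neg]
        rw [hr, hc, ← Matrix.mul_assoc, h1, Matrix.one_mul, hjn]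
      · have hjn : (j : ℕ) + 1 < n := by omega
        simp only [Matrix.mul_apply (M := T), Cl, Matrix.of_apply, hj, if_false, mul_ite, mul_one,
          mul_zero]
        rw [Finset.sum_eq_single ⟨(j : ℕ) + 1, hjn⟩]
        · simp [hT, ctrbMat]
        · intro b _ hb
          exact if_neg fun h => hb (Fin.ext h)
        · simp
    rw [← key, Matrix.mul_assoc, h1, Matrix.mul_one]

/-! ### Controllability gives observability -/

theorem isUnit_of_vecMul_eq_zero (H : Matrix (Fin n) (Fin n) F)
    (h : ∀ x : Fin n → F, x ᵥ* H = 0 → x = 0) : IsUnit H := by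
  have hs : Function.Surjective H.vecMulLinear :=
    LinearMap.injective_iff_surjective.1
      ((injective_iff_map_eq_zero H.vecMulLinear).2 fun x hx => h x hx)
  choose N hN using fun i : Fin n => hs (Pi.single i 1)
  refine IsUnit.of_mul_eq_one_right (Matrix.of N) ?_
  ext i j
  have := congrFun (hN i) j
  rw [Matrix.vecMulLinear_apply] at this
  rw [Matrix.mul_apply_eq_vecMul, Matrix.one_eq_pi_single, ← this]
  rfl

theorem isUnit_of_antitriangular (H : Matrix (Fin n) (Fin n) F)
    (h0 : ∀ i j : Fin n, (i : ℕ) + j + 1 < n → H i j = 0)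
    (h1 : ∀ i j : Fin n, (i : ℕ) + j + 1 = n → H i j = 1) : IsUnit H := by
  refine isUnit_of_vecMul_eq_zero H fun x hx => ?_
  -- Column `k` of `x ᵥ* H = 0` involves only the last `k + 1` entries of `x`.
  have key (k : ℕ) : ∀ i : Fin n, (i : ℕ) + k + 1 = n → x i = 0 := by
    induction k using Nat.strong_induction_on with
    | _ k ih =>
      intro i hi
      have hk := congrFun hx ⟨k, by omega⟩
      rw [Matrix.vecMul, dotProduct, Finset.sum_eq_single i, h1 _ _ (by simpa using hi),
        mul_one] at hk
      · exact hk
      · intro b _ hb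
        rcases lt_or_gt_of_ne (Fin.val_ne_of_ne hb) with hlt | hgt
        · rw [h0 _ _ (by simp only; omega), mul_zero]
        · rw [ih (n - 1 - b) (by omega) b (by omega), zero_mul]
      · simp
  funext i
  exact key (n - 1 - i) i (by omega)

/-- For controllable `(A, v)`, the row `u` with `u A^j v = 0` for `j < n - 1` and
`u A^{n-1} v = 1` is cyclic: the Hankel matrix `(u A^{i+j} v)` is anti-triangular. -/
theorem exists_obs_of_ctrb (hn : 1 ≤ n) (A : Matrix (Fin n) (Fin n) F)
    (v : Matrix (Fin n) (Fin 1) F) (h : IsUnit (ctrbMat A v)) :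
    ∃ u : Matrix (Fin 1) (Fin n) F, IsUnit (obsMat u A) := by
  have hM := h
  obtain ⟨⟨M, M', h1, h2⟩, hMe : M = ctrbMat A v⟩ := h
  set u : Matrix (Fin 1) (Fin n) F := Matrix.of fun _ j => M' ⟨n - 1, by omega⟩ j with hu
  have huv (j : ℕ) (hj : j < n) : (u * (A ^ j * v)) 0 0 = if j + 1 = n then 1 else 0 := by
    have hrow : (u * (A ^ j * v)) 0 0 = (M' * M) ⟨n - 1, by omega⟩ ⟨j, hj⟩ := by
      rw [Matrix.mul_apply, Matrix.mul_apply, hMe]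
      rfl
    rw [hrow, h2, Matrix.one_apply]
    exact if_congr (by rw [Fin.ext_iff]; simp only; omega) rfl rfl
  have hH (i j : Fin n) :
      (obsMat u A * ctrbMat A v) i j = (u * (A ^ ((i : ℕ) + j) * v)) 0 0 := by
    rw [pow_add, Matrix.mul_assoc, ← Matrix.mul_assoc, Matrix.mul_apply, Matrix.mul_apply]
    rfl
  have hunit : IsUnit (obsMat u A * ctrbMat A v) := by
    refine isUnit_of_antitriangular _ (fun i j hij => ?_) (fun i j hij => ?_)
    · rw [hH, huv _ (by omega), if_neg (by omega)]
    · rw [hH, huv _ (by omega), if_pos hij]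
  refine ⟨u, ?_⟩
  obtain ⟨U, hU⟩ := hM
  rw [← hU] at hunit
  exact (Units.isUnit_mul_units _ U).1 hunit

end Left

/-! ### Duality with the opposite ring -/

section Transpose

variable {F : Type*}

/-- The transpose with entries in the opposite ring. Over a noncommutative ring, unlike the plain
transpose, it reverses products. -/
def opT {m k : Type*} (M : Matrix m k F) : Matrix k m Fᵐᵒᵖ :=
  Matrix.of fun i j => MulOpposite.op (M j i)

/-- The inverse operation of `opT`. -/
def unopT {m k : Type*} (M : Matrix m k Fᵐᵒᵖ) : Matrix k m F :=
  Matrix.of fun i j => MulOpposite.unop (M j i)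

theorem opT_unopT {m k : Type*} (M : Matrix m k Fᵐᵒᵖ) : opT (unopT M) = M := rfl

theorem opT_inj {m k : Type*} {M N : Matrix m k F} : opT M = opT N ↔ M = N :=
  ⟨fun h => congrArg unopT h, fun h => congrArg opT h⟩

end Transpose

section Duality

variable {F : Type*} [DivisionRing F] {n : ℕ}

theorem opT_mul {l m k : Type*} [Fintype m] (M : Matrix l m F) (N : Matrix m k F) :
    opT (M * N) = opT N * opT M := by
  ext i j
  simp [opT, Matrix.mul_apply]

theorem opT_one : opT (1 : Matrix (Fin n) (Fin n) F) = 1 := by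
  ext i j
  by_cases h : i = j
  · subst h
    simp [opT]
  · simp [opT, Matrix.one_apply, h, Ne.symm h]

theorem opT_pow (A : Matrix (Fin n) (Fin n) F) (j : ℕ) : opT (A ^ j) = opT A ^ j := by
  induction j with
  | zero => simp [opT_one]
  | succ j ih => rw [pow_succ, opT_mul, ih, pow_succ']

theorem opT_zero {m k : Type*} : opT (0 : Matrix m k F) = 0 := rfl

theorem opT_sum {m k ι : Type*} (s : Finset ι) (M : ι → Matrix m k F) :
    opT (∑ i ∈ s, M i) = ∑ i ∈ s, opT (M i) := by
  ext i j
  simp [opT, Matrix.sum_apply]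

theorem isUnit_opT (M : Matrix (Fin n) (Fin n) F) : IsUnit (opT M) ↔ IsUnit M := by
  constructor
  · rintro ⟨⟨T, T', h1, h2⟩, hT : T = opT M⟩
    subst hT
    refine ⟨⟨M, unopT T', ?_, ?_⟩, rfl⟩
    · rw [← opT_inj, opT_mul, opT_unopT, h2, opT_one]
    · rw [← opT_inj, opT_mul, opT_unopT, h1, opT_one]
  · rintro ⟨⟨T, T', h1, h2⟩, rfl⟩
    exact ⟨⟨opT T, opT T', by rw [← opT_mul, h2, opT_one], by rw [← opT_mul, h1, opT_one]⟩, rfl⟩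

/-- The polynomial with the same coefficients, read in the opposite ring. -/
noncomputable def opP (f : F[X]) : Fᵐᵒᵖ[X] := opRingEquiv F (MulOpposite.op f)

/-- The inverse operation of `opP`. -/
noncomputable def unopP (f : Fᵐᵒᵖ[X]) : F[X] := ((opRingEquiv F).symm f).unop

theorem opP_unopP (f : Fᵐᵒᵖ[X]) : opP (unopP f) = f := by simp [opP, unopP]

theorem opP_inj {f g : F[X]} : opP f = opP g ↔ f = g := by simp [opP]

theorem opP_mul (f g : F[X]) : opP (f * g) = opP g * opP f := by simp [opP]

theorem opP_coeff (f : F[X]) (j : ℕ) : (opP f).coeff j = MulOpposite.op (f.coeff j) := by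
  simp [opP]

theorem opP_natDegree (f : F[X]) : (opP f).natDegree = f.natDegree := by simp [opP]

theorem opP_monic (f : F[X]) : (opP f).Monic ↔ f.Monic := by
  simp [opP, Monic]

theorem opT_Cr (g : F[X]) : opT (Cr n g) = Cl n (opP g) := by
  ext i j
  simp only [opT, Cr, Cl, Matrix.of_apply, Matrix.transpose_apply, opP_coeff]
  split_ifs <;> simp

theorem opT_e1row : opT (e1row F n) = e1 Fᵐᵒᵖ n := by
  ext i j
  simp only [opT, e1row, e1, Matrix.of_apply]
  split_ifs <;> simp

theorem opT_obsMat (u : Matrix (Fin 1) (Fin n) F) (A : Matrix (Fin n) (Fin n) F) :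
    opT (obsMat u A) = ctrbMat (opT A) (opT u) := by
  ext i j
  rw [ctrbMat, Matrix.of_apply, ← opT_pow, ← opT_mul]
  rfl

theorem opT_rightEval (u : Matrix (Fin 1) (Fin n) F) (A : Matrix (Fin n) (Fin n) F) (f : F[X]) :
    opT (rightEval u A f) = leftEval (opT A) (opT u) (opP f) := by
  simp only [rightEval, leftEval, opT_sum, opT_mul, opT_pow, opP_natDegree, opP_coeff,
    Matrix.mul_assoc]
  rfl

theorem isUnit_obsMat_iff (u : Matrix (Fin 1) (Fin n) F) (A : Matrix (Fin n) (Fin n) F) :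
    IsUnit (obsMat u A) ↔ IsUnit (ctrbMat (opT A) (opT u)) := by
  rw [← opT_obsMat, isUnit_opT]

theorem right_similar (hn : 1 ≤ n) (A : Matrix (Fin n) (Fin n) F)
    (g : F[X]) (S S' : Matrix (Fin n) (Fin n) F) (hg : g.Monic) (hd : g.natDegree = n)
    (h1 : S * S' = 1) (h2 : S' * S = 1) (hA : A = S * Cr n g * S') :
    IsUnit (obsMat (e1row F n * S') A) ∧
      ∀ h : F[X], (rightEval (e1row F n * S') A h = 0 ↔ ∃ h' : F[X], h = h' * g) := by
  have hA' : opT A = opT S' * Cl n (opP g) * opT S := by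
    rw [hA, opT_mul, opT_mul, opT_Cr, Matrix.mul_assoc]
  obtain ⟨hu, he⟩ := left_similar hn (opT A) (opP g) (opT S') (opT S) ((opP_monic g).2 hg)
    ((opP_natDegree g).trans hd) (by rw [← opT_mul, h1, opT_one]) (by rw [← opT_mul, h2, opT_one])
    hA'
  rw [← opT_e1row, ← opT_mul] at hu he
  refine ⟨(isUnit_obsMat_iff _ _).2 hu, fun h => ?_⟩
  rw [← opT_inj, opT_zero, opT_rightEval, he]
  constructor
  · rintro ⟨q, hq⟩
    exact ⟨unopP q, by rw [← opP_inj, opP_mul, opP_unopP, hq]⟩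
  · rintro ⟨q, rfl⟩
    exact ⟨opP q, opP_mul q g⟩

theorem exists_similar_of_obs (A : Matrix (Fin n) (Fin n) F)
    (u : Matrix (Fin 1) (Fin n) F) (h : IsUnit (obsMat u A)) :
    ∃ (g : F[X]) (S S' : Matrix (Fin n) (Fin n) F),
      g.Monic ∧ g.natDegree = n ∧ S * S' = 1 ∧ S' * S = 1 ∧ A = S * Cr n g * S' := by
  obtain ⟨g, T, T', hg, hd, h1, h2, hA⟩ :=
    exists_similar_of_ctrb (opT A) (opT u) ((isUnit_obsMat_iff u A).1 h)
  refine ⟨unopP g, unopT T', unopT T, ?_, ?_, ?_, ?_, ?_⟩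
  · rwa [← opP_monic, opP_unopP]
  · rwa [← opP_natDegree, opP_unopP]
  · rw [← opT_inj, opT_mul, opT_unopT, opT_unopT, h1, opT_one]
  · rw [← opT_inj, opT_mul, opT_unopT, opT_unopT, h2, opT_one]
  · rw [← opT_inj, opT_mul, opT_mul, opT_Cr, opP_unopP, opT_unopT, opT_unopT, hA,
      Matrix.mul_assoc]

theorem exists_ctrb_of_obs (hn : 1 ≤ n) (A : Matrix (Fin n) (Fin n) F)
    (u : Matrix (Fin 1) (Fin n) F) (h : IsUnit (obsMat u A)) :
    ∃ v : Matrix (Fin n) (Fin 1) F, IsUnit (ctrbMat A v) := by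
  -- `exists_obs_of_ctrb` over `Fᵐᵒᵖ` yields an output vector for `opT A`; its mirror image is `v`.
  obtain ⟨w, hw⟩ := exists_obs_of_ctrb hn (opT A) (opT u) ((isUnit_obsMat_iff u A).1 h)
  refine ⟨unopT w, ?_⟩
  rw [← isUnit_opT]
  convert hw using 1
  ext i j
  rw [obsMat, Matrix.of_apply, ← opT_pow, ← opT_unopT w, ← opT_mul]
  rfl

end Duality

/-- Theorem `P:ex`: for `A ∈ F^{n×n}` the existence of a right cyclic
vector, of a left cyclic vector, of a similarity to a left companion matrix, and of a
similarity to a right companion matrix are all equivalent; moreover the companion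
polynomials arising from such similarities are minimal polynomials of the induced
controllable/observable pairs. -/
theorem statement9 {F : Type*} [DivisionRing F] {n : ℕ} (hn : 1 ≤ n)
    (A : Matrix (Fin n) (Fin n) F) :
    ((∃ v : Matrix (Fin n) (Fin 1) F, IsUnit (ctrbMat A v)) ↔
      (∃ u : Matrix (Fin 1) (Fin n) F, IsUnit (obsMat u A))) ∧
    ((∃ v : Matrix (Fin n) (Fin 1) F, IsUnit (ctrbMat A v)) ↔
      (∃ (g : F[X]) (T T' : Matrix (Fin n) (Fin n) F),
        g.Monic ∧ g.natDegree = n ∧ T * T' = 1 ∧ T' * T = 1 ∧ A = T * Cl n g * T')) ∧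
    ((∃ v : Matrix (Fin n) (Fin 1) F, IsUnit (ctrbMat A v)) ↔
      (∃ (g : F[X]) (S S' : Matrix (Fin n) (Fin n) F),
        g.Monic ∧ g.natDegree = n ∧ S * S' = 1 ∧ S' * S = 1 ∧ A = S * Cr n g * S')) ∧
    (∀ (g : F[X]) (T T' : Matrix (Fin n) (Fin n) F),
      g.Monic → g.natDegree = n → T * T' = 1 → T' * T = 1 → A = T * Cl n g * T' →
      IsUnit (ctrbMat A (T * e1 F n)) ∧
        ∀ h : F[X], (leftEval A (T * e1 F n) h = 0 ↔ ∃ h' : F[X], h = g * h')) ∧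
    (∀ (g : F[X]) (S S' : Matrix (Fin n) (Fin n) F),
      g.Monic → g.natDegree = n → S * S' = 1 → S' * S = 1 → A = S * Cr n g * S' →
      IsUnit (obsMat (e1row F n * S') A) ∧
        ∀ h : F[X], (rightEval (e1row F n * S') A h = 0 ↔ ∃ h' : F[X], h = h' * g)) := by
  refine ⟨⟨?_, ?_⟩, ⟨?_, ?_⟩, ⟨?_, ?_⟩, left_similar hn A, right_similar hn A⟩
  · rintro ⟨v, hv⟩
    exact exists_obs_of_ctrb hn A v hv
  · rintro ⟨u, hu⟩
    exact exists_ctrb_of_obs hn A u hu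
  · rintro ⟨v, hv⟩
    exact exists_similar_of_ctrb A v hv
  · rintro ⟨g, T, T', hg, hd, h1, h2, hA⟩
    exact ⟨_, (left_similar hn A g T T' hg hd h1 h2 hA).1⟩
  · rintro ⟨v, hv⟩
    obtain ⟨u, hu⟩ := exists_obs_of_ctrb hn A v hv
    exact exists_similar_of_obs A u hu
  · rintro ⟨g, S, S', hg, hd, h1, h2, hA⟩
    exact exists_ctrb_of_obs hn A _ (right_similar hn A g S S' hg hd h1 h2 hA).1
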